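/- Let B_1 and B_2 be finite Blaschke products of the same degree n such that B_1' and B_2' have exactly the same zeros in the open unit disk 𝔻, with the same multiplicities. Then B_2 = T ∘ B_1 for some conformal automorphism T of 𝔻. -/

import Mathlib

open Metric Filter

/-- The order of vanishing of `f` at `z`. -/
noncomputable def vOrder (f : ℂ → ℂ) (z : ℂ) : ℕ∞ :=
  sInf ((fun n : ℕ => (n : ℕ∞)) '' {n : ℕ | iteratedDeriv n f z ≠ 0})

/-!
The hyperbolic density `1 / (1 - ‖w‖ ^ 2)` of the disc is invariant under automorphisms. If `f` and
`g` have the same critical points with the same multiplicities, then `h = f' / g'` is analytic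
without zeros, and the ratio `‖h‖ (1 - ‖g‖ ^ 2) / (1 - ‖f‖ ^ 2)` of the pull-backs of that density
is continuous on the whole disc. For Blaschke products it tends to `1` at the boundary, because
`‖B'(ζ)‖` on the unit circle is the sum of the boundary derivatives of the factors of `B`, and so is
the limit of `(1 - ‖B z‖ ^ 2) / (1 - ‖z‖ ^ 2)`.

The ratio has no local maximum larger than `1`: after moving `f z₀` and `g z₀` to `0`, a maximum
`‖h z₀‖ > 1` forces `‖g‖ < ‖f‖` near `z₀`, hence `‖h‖ < ‖h z₀‖` off `z₀`, against the maximum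
principle for `h`. Exchanging `f` and `g`, the ratio is identically `1`. Then, with the same
normalisation, `‖h‖ - 1` is `O(f - h z₀ * g)`, while `f - h z₀ * g`, whose derivative is
`(h - h z₀) * g'`, vanishes to higher order than `h - h z₀` unless `h` is constant. An open map `h`
cannot have modulus so close to constant, so `h` is constant and `f = h z₀ * g`.
-/

open Asymptotics ComplexConjugate Topology

section VanishingOrder

variable {f g h : ℂ → ℂ} {z₀ : ℂ}

theorem vOrder_eq_analyticOrderAt (hf : AnalyticAt ℂ f z₀) :
    vOrder f z₀ = analyticOrderAt f z₀ := by
  refine ENat.eq_of_forall_natCast_le_iff fun n => ?_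
  simp only [natCast_le_analyticOrderAt_iff_iteratedDeriv_eq_zero hf, vOrder, le_sInf_iff,
    Set.forall_mem_image, Set.mem_ofPred_eq, Nat.cast_le]
  exact forall_congr' fun i => by rw [← not_lt, not_imp_not]

theorem isLittleO_of_analyticOrderAt_lt (hf : AnalyticAt ℂ f z₀) (hg : AnalyticAt ℂ g z₀)
    (hlt : analyticOrderAt g z₀ < analyticOrderAt f z₀) : f =o[𝓝 z₀] g := by
  obtain ⟨n, hn⟩ := ENat.ne_top_iff_exists.1 hlt.ne_top
  obtain ⟨g₁, hg₁, hg₁0, hg_eq⟩ := hg.analyticOrderAt_eq_natCast.1 hn.symm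
  obtain ⟨f₁, hf₁, hf_eq⟩ := (natCast_le_analyticOrderAt hf (n := n + 1)).1 <| by
    rw [← hn] at hlt
    exact Order.add_one_le_of_lt hlt
  have hf₁_o : (fun z => (z - z₀) * f₁ z) =o[𝓝 z₀] g₁ := by
    have htendsto : Tendsto (fun z => (z - z₀) * f₁ z) (𝓝 z₀) (𝓝 0) := by
      simpa only [sub_self, zero_mul] using
        ((continuous_sub_right z₀).tendsto z₀).mul hf₁.continuousAt.tendsto
    exact ((isLittleO_one_iff ℂ).2 htendsto).trans_isBigO <|
      (isBigO_const_const _ hg₁0 _).trans <|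
        ((isEquivalent_const_iff_tendsto hg₁0).2 hg₁.continuousAt).isBigO_symm
  have hmul := (isBigO_refl (fun z => (z - z₀) ^ n) (𝓝 z₀)).mul_isLittleO hf₁_o
  refine (EventuallyEq.trans_isLittleO ?_ hmul).trans_eventuallyEq (EventuallyEq.symm hg_eq)
  exact hf_eq.mono fun z hz => by simp only [hz, pow_succ, smul_eq_mul, mul_assoc]

theorem analyticOrderAt_sub_const_mul (hf : AnalyticAt ℂ f z₀) (hg : AnalyticAt ℂ g z₀)
    (hh : AnalyticAt ℂ h z₀) (hf₀ : f z₀ = 0) (hg₀ : g z₀ = 0)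
    (hderiv : deriv f =ᶠ[𝓝 z₀] h * deriv g) :
    analyticOrderAt (fun z => f z - h z₀ * g z) z₀ =
      analyticOrderAt (fun z => h z - h z₀) z₀ + analyticOrderAt g z₀ := by
  have he : AnalyticAt ℂ (fun z => f z - h z₀ * g z) z₀ := hf.sub (analyticAt_const.mul hg)
  have hderiv_e : deriv (fun z => f z - h z₀ * g z) =ᶠ[𝓝 z₀] (fun z => h z - h z₀) * deriv g := by
    filter_upwards [hderiv, hf.eventually_analyticAt, hg.eventually_analyticAt] with z hz hfz hgz
    rw [deriv_fun_sub hfz.differentiableAt (hgz.differentiableAt.const_mul _),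
      deriv_const_mul _ hgz.differentiableAt, hz]
    simp only [Pi.mul_apply]
    ring
  have hg_order := hg.analyticOrderAt_deriv_add_one
  have he_order := he.analyticOrderAt_deriv_add_one
  simp only [hf₀, hg₀, mul_zero, sub_zero] at hg_order he_order
  rw [← he_order, analyticOrderAt_congr hderiv_e,
    analyticOrderAt_mul (hh.fun_sub analyticAt_const) hg.deriv, add_assoc, hg_order]

end VanishingOrder

theorem eventually_eq_of_norm_sub_norm_isLittleO {h : ℂ → ℂ} {z₀ : ℂ} (hh : AnalyticAt ℂ h z₀)
    (hne : h z₀ ≠ 0) (ho : (fun z => ‖h z‖ - ‖h z₀‖) =o[𝓝 z₀] fun z => h z - h z₀) :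
    ∀ᶠ z in 𝓝 z₀, h z = h z₀ := by
  refine hh.eventually_constant_or_nhds_le_map_nhds.resolve_right fun hopen => ?_
  -- `h` is open, so it takes the values `(1 + t) * h z₀`, at which the two sides have equal norms
  have hnear : ∀ᶠ w in 𝓝 (h z₀), ‖‖w‖ - ‖h z₀‖‖ ≤ 1 / 2 * ‖w - h z₀‖ :=
    hopen (eventually_map.2 (ho.bound one_half_pos))
  have hray : Tendsto (fun t : ℝ => (1 + t : ℂ) * h z₀) (𝓝[>] 0) (𝓝 (h z₀)) := by
    have hcont : Continuous fun t : ℝ => (1 + t : ℂ) * h z₀ := by fun_prop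
    simpa using (hcont.tendsto 0).mono_left nhdsWithin_le_nhds
  obtain ⟨t, ht, htpos : 0 < t⟩ := ((hray.eventually hnear).and self_mem_nhdsWithin).exists
  have hnorm : ‖(1 + t : ℂ)‖ = 1 + t := by
    exact_mod_cast Complex.norm_of_nonneg (by positivity : 0 ≤ 1 + t)
  have hsub : (1 + t : ℂ) * h z₀ - h z₀ = t * h z₀ := by ring
  rw [hsub, norm_mul, norm_mul, hnorm, Complex.norm_of_nonneg htpos.le, ← sub_one_mul,
    add_sub_cancel_left, Real.norm_of_nonneg (by positivity)] at ht
  nlinarith [mul_pos htpos (norm_pos_iff.2 hne)]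

/-- The ratio at `z` of the pull-backs under `f` and `g` of the hyperbolic density
`1 / (1 - ‖w‖ ^ 2)`, where `h` stands for `f' / g'` and so gives the ratio a value also at the
common critical points of `f` and `g`. -/
noncomputable def densityRatio (h f g : ℂ → ℂ) (z : ℂ) : ℝ :=
  ‖h z‖ * (1 - ‖g z‖ ^ 2) / (1 - ‖f z‖ ^ 2)

section LocalTheory

variable {f g h : ℂ → ℂ} {z₀ : ℂ}

theorem densityRatio_of_eq_zero (hf₀ : f z₀ = 0) (hg₀ : g z₀ = 0) :
    densityRatio h f g z₀ = ‖h z₀‖ := by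
  simp [densityRatio, hf₀, hg₀]

theorem eventually_norm_lt_of_eq_zero (hf : ContinuousAt f z₀) (hf₀ : f z₀ = 0) {r : ℝ}
    (hr : 0 < r) : ∀ᶠ z in 𝓝 z₀, ‖f z‖ < r :=
  hf.norm.eventually_lt_const (by simpa [hf₀] using hr)

theorem eventually_norm_lt_norm_of_deriv_eq_mul (hf : AnalyticAt ℂ f z₀) (hg : AnalyticAt ℂ g z₀)
    (hh : AnalyticAt ℂ h z₀) (hf₀ : f z₀ = 0) (hg₀ : g z₀ = 0)
    (hderiv : deriv f =ᶠ[𝓝 z₀] h * deriv g) (hg' : analyticOrderAt (deriv g) z₀ ≠ ⊤)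
    (hgt : 1 < ‖h z₀‖) :
    ∀ᶠ z in 𝓝[≠] z₀, ‖g z‖ < ‖f z‖ := by
  have hg_order : analyticOrderAt g z₀ ≠ ⊤ := by
    rw [← show (g · - g z₀) = g by simp [hg₀], ← hg.analyticOrderAt_deriv_add_one]
    simpa using hg'
  have hh_order : analyticOrderAt (fun z => h z - h z₀) z₀ ≠ 0 :=
    (hh.fun_sub analyticAt_const).analyticOrderAt_ne_zero.2 (sub_self _)
  have hlittle : (fun z => f z - h z₀ * g z) =o[𝓝 z₀] g := by
    refine isLittleO_of_analyticOrderAt_lt (hf.sub (analyticAt_const.mul hg)) hg ?_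
    rw [analyticOrderAt_sub_const_mul hf hg hh hf₀ hg₀ hderiv]
    exact ENat.lt_add_left hg_order (pos_iff_ne_zero.2 hh_order)
  have hg_ne : ∀ᶠ z in 𝓝[≠] z₀, g z ≠ 0 :=
    hg.eventually_eq_zero_or_eventually_ne_zero.resolve_left (mt analyticOrderAt_eq_top.2 hg_order)
  filter_upwards [hg_ne, (hlittle.bound (half_pos (sub_pos.2 hgt))).filter_mono nhdsWithin_le_nhds]
    with z hz hbound
  have htri : ‖h z₀‖ * ‖g z‖ ≤ ‖f z - h z₀ * g z‖ + ‖f z‖ := by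
    rw [← norm_mul, ← norm_sub_rev]
    exact norm_le_norm_sub_add _ _
  nlinarith [norm_pos_iff.2 hz]

theorem densityRatio_le_one_of_isLocalMax_of_eq_zero (hf : AnalyticAt ℂ f z₀)
    (hg : AnalyticAt ℂ g z₀) (hh : AnalyticAt ℂ h z₀) (hf₀ : f z₀ = 0) (hg₀ : g z₀ = 0)
    (hderiv : deriv f =ᶠ[𝓝 z₀] h * deriv g) (hg' : analyticOrderAt (deriv g) z₀ ≠ ⊤)
    (hmax : IsLocalMax (densityRatio h f g) z₀) : densityRatio h f g z₀ ≤ 1 := by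
  rw [densityRatio_of_eq_zero hf₀ hg₀]
  by_contra! hgt
  have hf_lt := eventually_norm_lt_of_eq_zero hf.continuousAt hf₀ one_pos
  have hlt : ∀ᶠ z in 𝓝[≠] z₀, ‖h z‖ < ‖h z₀‖ := by
    filter_upwards [eventually_norm_lt_norm_of_deriv_eq_mul hf hg hh hf₀ hg₀ hderiv hg' hgt,
      hf_lt.filter_mono nhdsWithin_le_nhds, hmax.filter_mono nhdsWithin_le_nhds] with z hgf hf1 hz
    rw [densityRatio_of_eq_zero hf₀ hg₀, densityRatio,
      div_le_iff₀ (by nlinarith [norm_nonneg (f z)])] at hz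
    have hsq : 1 - ‖f z‖ ^ 2 < 1 - ‖g z‖ ^ 2 := by gcongr
    exact lt_of_mul_lt_mul_right
      (hz.trans_lt (mul_lt_mul_of_pos_left hsq (one_pos.trans hgt)))
      (by nlinarith [norm_nonneg (g z)])
  have hmax_h : IsLocalMax (norm ∘ h) z₀ :=
    (eventually_nhdsWithin_iff.1 hlt).mono fun z hz => by
      rcases eq_or_ne z z₀ with rfl | hne
      exacts [le_rfl, (hz hne).le]
  have hconst := Complex.eventually_eq_of_isLocalMax_norm
    (hh.eventually_analyticAt.mono fun _ hz => hz.differentiableAt) hmax_h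
  obtain ⟨z, hz_lt, hz_eq⟩ := (hlt.and (hconst.filter_mono nhdsWithin_le_nhds)).exists
  exact hz_lt.ne (congrArg norm hz_eq)

theorem norm_sub_one_isBigO_of_densityRatio_eq_one (hf : ContinuousAt f z₀) (hg : ContinuousAt g z₀)
    (hf₀ : f z₀ = 0) (hg₀ : g z₀ = 0) (hratio : ∀ᶠ z in 𝓝 z₀, densityRatio h f g z = 1) :
    (fun z => ‖h z‖ - 1) =O[𝓝 z₀] fun z => f z - h z₀ * g z := by
  have hh₀ : ‖h z₀‖ = 1 := by rw [← densityRatio_of_eq_zero hf₀ hg₀, hratio.self_of_nhds]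
  refine IsBigO.of_bound 2 ?_
  filter_upwards [hratio, eventually_norm_lt_of_eq_zero hf hf₀ one_half_pos,
    eventually_norm_lt_of_eq_zero hg hg₀ one_half_pos] with z hz hf_half hg_half
  have hkey : (‖h z‖ - 1) * (1 - ‖g z‖ ^ 2) = (‖g z‖ - ‖f z‖) * (‖g z‖ + ‖f z‖) := by
    rw [densityRatio, div_eq_one_iff_eq (by nlinarith [norm_nonneg (f z)])] at hz
    linear_combination hz
  have htri : |‖g z‖ - ‖f z‖| ≤ ‖f z - h z₀ * g z‖ := by
    simpa [hh₀, abs_sub_comm] using abs_norm_sub_norm_le (f z) (h z₀ * g z)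
  have hden : 1 / 2 ≤ 1 - ‖g z‖ ^ 2 := by nlinarith [norm_nonneg (g z)]
  have hsum : ‖g z‖ + ‖f z‖ ≤ 1 := by linarith
  calc ‖‖h z‖ - 1‖ = 2 * (|‖h z‖ - 1| * (1 / 2)) := by rw [Real.norm_eq_abs]; ring
    _ ≤ 2 * (|‖h z‖ - 1| * |1 - ‖g z‖ ^ 2|) := by
      gcongr
      exact hden.trans (le_abs_self _)
    _ = 2 * (|‖g z‖ - ‖f z‖| * (‖g z‖ + ‖f z‖)) := by
      rw [← abs_mul, hkey, abs_mul, abs_of_nonneg (by positivity : 0 ≤ ‖g z‖ + ‖f z‖)]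
    _ ≤ 2 * (‖f z - h z₀ * g z‖ * 1) := by gcongr
    _ = 2 * ‖f z - h z₀ * g z‖ := by rw [mul_one]

theorem eventuallyEq_mul_of_densityRatio_eq_one (hf : AnalyticAt ℂ f z₀) (hg : AnalyticAt ℂ g z₀)
    (hh : AnalyticAt ℂ h z₀) (hf₀ : f z₀ = 0) (hg₀ : g z₀ = 0)
    (hderiv : deriv f =ᶠ[𝓝 z₀] h * deriv g) (hratio : ∀ᶠ z in 𝓝 z₀, densityRatio h f g z = 1) :
    ‖h z₀‖ = 1 ∧ f =ᶠ[𝓝 z₀] fun z => h z₀ * g z := by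
  have hh₀ : ‖h z₀‖ = 1 := by rw [← densityRatio_of_eq_zero hf₀ hg₀, hratio.self_of_nhds]
  refine ⟨hh₀, ?_⟩
  have horder := analyticOrderAt_sub_const_mul hf hg hh hf₀ hg₀ hderiv
  suffices htop : analyticOrderAt (fun z => f z - h z₀ * g z) z₀ = ⊤ from
    (analyticOrderAt_eq_top.1 htop).mono fun z hz => sub_eq_zero.1 hz
  by_cases hh_top : analyticOrderAt (fun z => h z - h z₀) z₀ = ⊤
  · rw [horder, hh_top, top_add]
  · have hlittle : (fun z => f z - h z₀ * g z) =o[𝓝 z₀] fun z => h z - h z₀ := by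
      refine isLittleO_of_analyticOrderAt_lt (hf.sub (analyticAt_const.mul hg))
        (hh.sub analyticAt_const) ?_
      rw [horder, add_comm]
      exact ENat.lt_add_left hh_top (pos_iff_ne_zero.2 (hg.analyticOrderAt_ne_zero.2 hg₀))
    refine absurd (analyticOrderAt_eq_top.2 ?_) hh_top
    have hbig := norm_sub_one_isBigO_of_densityRatio_eq_one hf.continuousAt hg.continuousAt hf₀ hg₀
      hratio
    rw [← hh₀] at hbig
    exact (eventually_eq_of_norm_sub_norm_isLittleO hh (norm_ne_zero_iff.1 (by simp [hh₀]))
      (hbig.trans_isLittleO hlittle)).mono fun z hz => sub_eq_zero.2 hz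

end LocalTheory

/-- The Blaschke factor with zero `a`. For `‖a‖ < 1` it is the involutive automorphism of the unit
disc exchanging `0` and `a`, and every automorphism of the disc is a rotation of such a factor. -/
noncomputable def blaschkeFactor (a z : ℂ) : ℂ :=
  (a - z) / (1 - conj a * z)

section BlaschkeFactor

variable {a b c w : ℂ}

theorem one_sub_conj_mul_ne_zero (ha : ‖a‖ < 1) (hw : ‖w‖ ≤ 1) : 1 - conj a * w ≠ 0 := by
  refine sub_ne_zero.2 fun h => ?_
  have hnorm : ‖a‖ * ‖w‖ = 1 := by simpa using (congrArg norm h).symm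
  nlinarith [norm_nonneg a, norm_nonneg w]

theorem blaschkeFactor_self (a : ℂ) : blaschkeFactor a a = 0 := by
  simp [blaschkeFactor]

theorem one_sub_norm_blaschkeFactor_sq (ha : ‖a‖ < 1) (hw : ‖w‖ ≤ 1) :
    1 - ‖blaschkeFactor a w‖ ^ 2 = (1 - ‖a‖ ^ 2) / ‖1 - conj a * w‖ ^ 2 * (1 - ‖w‖ ^ 2) := by
  have hden : ‖1 - conj a * w‖ ^ 2 ≠ 0 :=
    pow_ne_zero 2 (norm_ne_zero_iff.2 (one_sub_conj_mul_ne_zero ha hw))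
  have hnum : ‖1 - conj a * w‖ ^ 2 - ‖a - w‖ ^ 2 = (1 - ‖a‖ ^ 2) * (1 - ‖w‖ ^ 2) := by
    simp only [Complex.sq_norm, Complex.normSq_apply, Complex.sub_re, Complex.sub_im,
      Complex.mul_re, Complex.mul_im, Complex.conj_re, Complex.conj_im, Complex.one_re,
      Complex.one_im]
    ring
  rw [blaschkeFactor, norm_div, div_pow, one_sub_div hden, hnum]
  ring

theorem norm_blaschkeFactor_lt_one (ha : ‖a‖ < 1) (hw : ‖w‖ < 1) : ‖blaschkeFactor a w‖ < 1 := by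
  have hden := one_sub_conj_mul_ne_zero ha hw.le
  have ha' : 0 < 1 - ‖a‖ ^ 2 := by nlinarith [norm_nonneg a]
  have hw' : 0 < 1 - ‖w‖ ^ 2 := by nlinarith [norm_nonneg w]
  have hpos : 0 < 1 - ‖blaschkeFactor a w‖ ^ 2 := by
    rw [one_sub_norm_blaschkeFactor_sq ha hw.le]
    positivity
  exact (sq_lt_one_iff₀ (norm_nonneg _)).1 (sub_pos.1 hpos)

theorem hasDerivAt_blaschkeFactor (ha : ‖a‖ < 1) (hw : ‖w‖ ≤ 1) :
    HasDerivAt (blaschkeFactor a) (-(1 - ‖a‖ ^ 2) / (1 - conj a * w) ^ 2) w := by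
  have hden := ((hasDerivAt_id' w).const_mul (conj a)).const_sub 1
  refine (((hasDerivAt_id' w).const_sub a).fun_div hden
    (one_sub_conj_mul_ne_zero ha hw)).congr_deriv ?_
  rw [← Complex.conj_mul']
  ring

theorem analyticAt_blaschkeFactor (ha : ‖a‖ < 1) (hw : ‖w‖ ≤ 1) :
    AnalyticAt ℂ (blaschkeFactor a) w :=
  (analyticAt_const.sub analyticAt_id).div
    (analyticAt_const.sub (analyticAt_const.mul analyticAt_id)) (one_sub_conj_mul_ne_zero ha hw)

theorem norm_deriv_blaschkeFactor (ha : ‖a‖ < 1) (hw : ‖w‖ ≤ 1) :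
    ‖deriv (blaschkeFactor a) w‖ = (1 - ‖a‖ ^ 2) / ‖1 - conj a * w‖ ^ 2 := by
  have ha' : 0 ≤ 1 - ‖a‖ ^ 2 := by nlinarith [norm_nonneg a]
  rw [(hasDerivAt_blaschkeFactor ha hw).deriv, norm_div, norm_neg, norm_pow]
  congr 1
  exact_mod_cast Complex.norm_of_nonneg ha'

theorem norm_deriv_blaschkeFactor_pos (ha : ‖a‖ < 1) (hw : ‖w‖ ≤ 1) :
    0 < ‖deriv (blaschkeFactor a) w‖ := by
  have ha' : 0 < 1 - ‖a‖ ^ 2 := by nlinarith [norm_nonneg a]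
  have hden := one_sub_conj_mul_ne_zero ha hw
  rw [norm_deriv_blaschkeFactor ha hw]
  positivity

theorem one_sub_norm_blaschkeFactor_sq_eq_norm_deriv_mul (ha : ‖a‖ < 1) (hw : ‖w‖ ≤ 1) :
    1 - ‖blaschkeFactor a w‖ ^ 2 = ‖deriv (blaschkeFactor a) w‖ * (1 - ‖w‖ ^ 2) := by
  rw [one_sub_norm_blaschkeFactor_sq ha hw, norm_deriv_blaschkeFactor ha hw]

theorem blaschkeFactor_involutive (ha : ‖a‖ < 1) (hw : ‖w‖ ≤ 1) :
    blaschkeFactor a (blaschkeFactor a w) = w := by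
  have hden := one_sub_conj_mul_ne_zero ha hw
  have haa := one_sub_conj_mul_ne_zero ha ha.le
  have hnum : a - blaschkeFactor a w = w * (1 - conj a * a) / (1 - conj a * w) := by
    rw [blaschkeFactor, eq_div_iff hden, sub_mul, div_mul_cancel₀ _ hden]
    ring
  have hden' : 1 - conj a * blaschkeFactor a w = (1 - conj a * a) / (1 - conj a * w) := by
    rw [blaschkeFactor, eq_div_iff hden, sub_mul, mul_assoc, div_mul_cancel₀ _ hden]
    ring
  rw [blaschkeFactor, hnum, hden', div_div_div_cancel_right₀ hden, mul_div_cancel_right₀ _ haa]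

theorem blaschkeFactor_mul_of_norm_eq_one (hc : ‖c‖ = 1) (a w : ℂ) :
    blaschkeFactor a (c * w) = c * blaschkeFactor (conj c * a) w := by
  have hcc : c * conj c = 1 := by rw [Complex.mul_conj', hc]; norm_num
  rw [blaschkeFactor, blaschkeFactor, mul_div_assoc', mul_sub, ← mul_assoc c, hcc, one_mul]
  simp only [map_mul, Complex.conj_conj, mul_assoc, mul_left_comm]

theorem exists_blaschkeFactor_comp_eq (ha : ‖a‖ < 1) (hb : ‖b‖ < 1) :
    ∃ τ : ℂ, ‖τ‖ = 1 ∧ ∀ w, ‖w‖ < 1 →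
      blaschkeFactor a (blaschkeFactor b w) = τ * blaschkeFactor (blaschkeFactor b a) w := by
  have hba := one_sub_conj_mul_ne_zero hb ha.le
  have hab := one_sub_conj_mul_ne_zero ha hb.le
  have hconj : conj (1 - conj b * a) = 1 - conj a * b := by simp [mul_comm]
  refine ⟨-(1 - conj b * a) / (1 - conj a * b), ?_, fun w hw => ?_⟩
  · rw [norm_div, norm_neg, ← hconj, Complex.norm_conj, div_self (norm_ne_zero_iff.2 hba)]
  · have hbw := one_sub_conj_mul_ne_zero hb hw.le
    have hleft : blaschkeFactor a (blaschkeFactor b w) =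
        ((a - b) + (1 - conj b * a) * w) / ((1 - conj a * b) - (conj b - conj a) * w) := by
      rw [blaschkeFactor, blaschkeFactor, mul_div_assoc', sub_div' hbw, one_sub_div hbw,
        div_div_div_cancel_right₀ hbw]
      congr 1 <;> ring
    have hright : blaschkeFactor (blaschkeFactor b a) w =
        ((b - a) - (1 - conj b * a) * w) / (1 - conj b * a) /
          (((1 - conj a * b) - (conj b - conj a) * w) / (1 - conj a * b)) := by
      rw [blaschkeFactor, blaschkeFactor, map_div₀, hconj, map_sub, div_sub' hba,
        div_mul_eq_mul_div, one_sub_div hab]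
    rw [hleft, hright, div_div_div_eq, div_mul_div_comm,
      ← mul_div_mul_left _ _ (mul_ne_zero hab hba)]
    congr 1 <;> ring

theorem exists_mul_blaschkeFactor_eq (ha : ‖a‖ < 1) (hb : ‖b‖ < 1) (hc : ‖c‖ = 1) :
    ∃ τ z₀ : ℂ, ‖τ‖ = 1 ∧ ‖z₀‖ < 1 ∧ ∀ w, ‖w‖ < 1 →
      blaschkeFactor a (c * blaschkeFactor b w) = τ * blaschkeFactor z₀ w := by
  have hca : ‖conj c * a‖ < 1 := by simpa [hc] using ha
  obtain ⟨τ, hτ, hcomp⟩ := exists_blaschkeFactor_comp_eq hca hb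
  refine ⟨c * τ, blaschkeFactor b (conj c * a), by rw [norm_mul, hc, hτ, one_mul],
    norm_blaschkeFactor_lt_one hb hca, fun w hw => ?_⟩
  rw [blaschkeFactor_mul_of_norm_eq_one hc, hcomp w hw, mul_assoc]

end BlaschkeFactor

section Normalization

variable {a b : ℂ} {f g h : ℂ → ℂ} {z₀ : ℂ}

theorem analyticAt_blaschkeFactor_comp (ha : ‖a‖ < 1) (hf : AnalyticAt ℂ f z₀) (hf₀ : ‖f z₀‖ < 1) :
    AnalyticAt ℂ (blaschkeFactor a ∘ f) z₀ :=
  (analyticAt_blaschkeFactor ha hf₀.le).comp hf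

theorem deriv_blaschkeFactor_comp (ha : ‖a‖ < 1) (hf : AnalyticAt ℂ f z₀) (hf₀ : ‖f z₀‖ < 1) :
    deriv (blaschkeFactor a ∘ f) =ᶠ[𝓝 z₀] (deriv (blaschkeFactor a) ∘ f) * deriv f := by
  filter_upwards [hf.eventually_analyticAt, hf.continuousAt.norm.eventually_lt_const hf₀]
    with z hz hz1
  exact deriv_comp z (analyticAt_blaschkeFactor ha hz1.le).differentiableAt hz.differentiableAt

theorem analyticOrderAt_deriv_blaschkeFactor_comp (ha : ‖a‖ < 1) (hf : AnalyticAt ℂ f z₀)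
    (hf₀ : ‖f z₀‖ < 1) :
    analyticOrderAt (deriv (blaschkeFactor a ∘ f)) z₀ = analyticOrderAt (deriv f) z₀ := by
  have hφ : AnalyticAt ℂ (deriv (blaschkeFactor a) ∘ f) z₀ :=
    (analyticAt_blaschkeFactor ha hf₀.le).deriv.comp hf
  have hne : deriv (blaschkeFactor a) (f z₀) ≠ 0 :=
    norm_pos_iff.1 (norm_deriv_blaschkeFactor_pos ha hf₀.le)
  rw [analyticOrderAt_congr (deriv_blaschkeFactor_comp ha hf hf₀), analyticOrderAt_mul hφ hf.deriv,
    hφ.analyticOrderAt_eq_zero.2 hne, zero_add]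

theorem densityRatio_blaschkeFactor_comp {z : ℂ} (ha : ‖a‖ < 1) (hb : ‖b‖ < 1) (hf : ‖f z‖ ≤ 1)
    (hg : ‖g z‖ ≤ 1) :
    densityRatio ((deriv (blaschkeFactor a) ∘ f) * h / (deriv (blaschkeFactor b) ∘ g))
      (blaschkeFactor a ∘ f) (blaschkeFactor b ∘ g) z = densityRatio h f g z := by
  have hf' := (norm_deriv_blaschkeFactor_pos ha hf).ne'
  have hg' := (norm_deriv_blaschkeFactor_pos hb hg).ne'
  simp only [densityRatio, Pi.div_apply, Pi.mul_apply, Function.comp_apply, norm_div, norm_mul,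
    one_sub_norm_blaschkeFactor_sq_eq_norm_deriv_mul ha hf,
    one_sub_norm_blaschkeFactor_sq_eq_norm_deriv_mul hb hg]
  rw [← mul_assoc, div_mul_cancel₀ _ hg', mul_assoc, mul_div_mul_left _ _ hf']

theorem exists_deriv_blaschkeFactor_comp_eq_mul (ha : ‖a‖ < 1) (hb : ‖b‖ < 1)
    (hf : AnalyticAt ℂ f z₀) (hg : AnalyticAt ℂ g z₀) (hh : AnalyticAt ℂ h z₀) (hf₀ : ‖f z₀‖ < 1)
    (hg₀ : ‖g z₀‖ < 1) (hderiv : deriv f =ᶠ[𝓝 z₀] h * deriv g) :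
    ∃ h₁ : ℂ → ℂ, AnalyticAt ℂ h₁ z₀ ∧
      deriv (blaschkeFactor a ∘ f) =ᶠ[𝓝 z₀] h₁ * deriv (blaschkeFactor b ∘ g) ∧
      densityRatio h₁ (blaschkeFactor a ∘ f) (blaschkeFactor b ∘ g) =ᶠ[𝓝 z₀]
        densityRatio h f g := by
  have hf_lt := hf.continuousAt.norm.eventually_lt_const hf₀
  have hg_lt := hg.continuousAt.norm.eventually_lt_const hg₀
  refine ⟨(deriv (blaschkeFactor a) ∘ f) * h / (deriv (blaschkeFactor b) ∘ g), ?_, ?_, ?_⟩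
  · exact (((analyticAt_blaschkeFactor ha hf₀.le).deriv.comp hf).mul hh).div
      ((analyticAt_blaschkeFactor hb hg₀.le).deriv.comp hg)
      (norm_pos_iff.1 (norm_deriv_blaschkeFactor_pos hb hg₀.le))
  · filter_upwards [deriv_blaschkeFactor_comp ha hf hf₀, deriv_blaschkeFactor_comp hb hg hg₀,
      hderiv, hg_lt] with z hfz hgz hz hg1
    have hne : deriv (blaschkeFactor b) (g z) ≠ 0 :=
      norm_pos_iff.1 (norm_deriv_blaschkeFactor_pos hb hg1.le)
    rw [hfz, Pi.mul_apply, hz, Pi.mul_apply, Pi.mul_apply, hgz, Pi.div_apply, Pi.mul_apply,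
      Pi.mul_apply, Function.comp_apply, Function.comp_apply, ← mul_assoc, ← mul_assoc,
      div_mul_cancel₀ _ hne]
  · filter_upwards [hf_lt, hg_lt] with z hf1 hg1
    exact densityRatio_blaschkeFactor_comp ha hb hf1.le hg1.le

theorem densityRatio_le_one_of_isLocalMax (hf : AnalyticAt ℂ f z₀) (hg : AnalyticAt ℂ g z₀)
    (hh : AnalyticAt ℂ h z₀) (hf₀ : ‖f z₀‖ < 1) (hg₀ : ‖g z₀‖ < 1)
    (hderiv : deriv f =ᶠ[𝓝 z₀] h * deriv g) (hg' : analyticOrderAt (deriv g) z₀ ≠ ⊤)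
    (hmax : IsLocalMax (densityRatio h f g) z₀) : densityRatio h f g z₀ ≤ 1 := by
  obtain ⟨h₁, hh₁, hderiv₁, hratio⟩ :=
    exists_deriv_blaschkeFactor_comp_eq_mul hf₀ hg₀ hf hg hh hf₀ hg₀ hderiv
  rw [← hratio.self_of_nhds]
  exact densityRatio_le_one_of_isLocalMax_of_eq_zero (analyticAt_blaschkeFactor_comp hf₀ hf hf₀)
    (analyticAt_blaschkeFactor_comp hg₀ hg hg₀) hh₁ (blaschkeFactor_self _) (blaschkeFactor_self _)
    hderiv₁ (by rwa [analyticOrderAt_deriv_blaschkeFactor_comp hg₀ hg hg₀])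
    (hmax.congr hratio.symm)

theorem exists_eventuallyEq_mul_blaschkeFactor (hf : AnalyticAt ℂ f z₀) (hg : AnalyticAt ℂ g z₀)
    (hh : AnalyticAt ℂ h z₀) (hf₀ : ‖f z₀‖ < 1) (hg₀ : ‖g z₀‖ < 1)
    (hderiv : deriv f =ᶠ[𝓝 z₀] h * deriv g) (hratio : ∀ᶠ z in 𝓝 z₀, densityRatio h f g z = 1) :
    ∃ τ w : ℂ, ‖τ‖ = 1 ∧ ‖w‖ < 1 ∧ ∀ᶠ z in 𝓝 z₀, f z = τ * blaschkeFactor w (g z) := by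
  obtain ⟨h₁, hh₁, hderiv₁, hratio₁⟩ :=
    exists_deriv_blaschkeFactor_comp_eq_mul hf₀ hg₀ hf hg hh hf₀ hg₀ hderiv
  obtain ⟨hnorm, heq⟩ := eventuallyEq_mul_of_densityRatio_eq_one
    (analyticAt_blaschkeFactor_comp hf₀ hf hf₀) (analyticAt_blaschkeFactor_comp hg₀ hg hg₀) hh₁
    (blaschkeFactor_self _) (blaschkeFactor_self _) hderiv₁ (hratio₁.trans hratio)
  obtain ⟨τ, w, hτ, hw, hcomp⟩ := exists_mul_blaschkeFactor_eq hf₀ hg₀ hnorm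
  refine ⟨τ, w, hτ, hw, ?_⟩
  filter_upwards [heq, hf.continuousAt.norm.eventually_lt_const hf₀,
    hg.continuousAt.norm.eventually_lt_const hg₀] with z hz hf1 hg1
  rw [← hcomp _ hg1, ← blaschkeFactor_involutive hf₀ hf1.le]
  exact congrArg _ hz

end Normalization

theorem exists_analyticOnNhd_eventuallyEq_mul {𝕜 : Type*} [NontriviallyNormedField 𝕜]
    [CompleteSpace 𝕜] {F G : 𝕜 → 𝕜} {U : Set 𝕜}
    (hF : AnalyticOnNhd 𝕜 F U) (hG : AnalyticOnNhd 𝕜 G U)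
    (hne_top : ∀ z ∈ U, analyticOrderAt G z ≠ ⊤)
    (horder : ∀ z ∈ U, analyticOrderAt F z = analyticOrderAt G z) :
    ∃ h : 𝕜 → 𝕜, AnalyticOnNhd 𝕜 h U ∧ (∀ z ∈ U, h z ≠ 0) ∧ ∀ z ∈ U, F =ᶠ[𝓝 z] h * G := by
  have hquot : MeromorphicOn (F / G) U := hF.meromorphicOn.div hG.meromorphicOn
  have hnf := meromorphicNFOn_toMeromorphicNFOn (F / G) U
  have hzero : ∀ z ∈ U, meromorphicOrderAt (toMeromorphicNFOn (F / G) U) z = 0 := fun z hz => by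
    rw [meromorphicOrderAt_toMeromorphicNFOn hquot hz,
      meromorphicOrderAt_div (hF z hz).meromorphicAt (hG z hz).meromorphicAt,
      (hF z hz).meromorphicOrderAt_eq, (hG z hz).meromorphicOrderAt_eq, horder z hz]
    obtain ⟨n, hn⟩ := ENat.ne_top_iff_exists.1 (hne_top z hz)
    rw [← hn]
    exact LinearOrderedAddCommGroupWithTop.sub_self_eq_zero_of_ne_top (by simp)
  have hanalytic : AnalyticOnNhd 𝕜 (toMeromorphicNFOn (F / G) U) U := fun z hz =>
    (hnf hz).meromorphicOrderAt_nonneg_iff_analyticAt.1 (hzero z hz).ge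
  refine ⟨_, hanalytic, fun z hz => (hnf hz).meromorphicOrderAt_eq_zero_iff.1 (hzero z hz),
    fun z hz => ?_⟩
  refine ((hF z hz).continuousAt.eventuallyEq_nhds_iff_eventuallyEq_nhdsNE
    ((hanalytic z hz).mul (hG z hz)).continuousAt).1 ?_
  have hG_ne : ∀ᶠ w in 𝓝[≠] z, G w ≠ 0 :=
    (hG z hz).eventually_eq_zero_or_eventually_ne_zero.resolve_left
      (mt analyticOrderAt_eq_top.2 (hne_top z hz))
  filter_upwards [hquot.toMeromorphicNFOn_eq_self_on_nhdsNE hz, hG_ne] with w hw hGw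
  rw [Pi.mul_apply, hw, Pi.div_apply, div_mul_cancel₀ _ hGw]

theorem le_of_isLocalMax_le_of_tendsto_frontier {X : Type*} [TopologicalSpace X] {U : Set X}
    {ψ : X → ℝ} {c : ℝ} (hU : IsOpen U) (hUc : IsCompact (closure U)) (hψ : ContinuousOn ψ U)
    (hfrontier : ∀ x ∈ frontier U, Tendsto ψ (𝓝[U] x) (𝓝 c))
    (hmax : ∀ x ∈ U, IsLocalMax ψ x → ψ x ≤ c) {x : X} (hx : x ∈ U) : ψ x ≤ c := by
  have hlim : ∀ y ∈ closure U, ∃ l, Tendsto ψ (𝓝[U] y) (𝓝 l) := fun y hy => by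
    by_cases hyU : y ∈ U
    exacts [⟨ψ y, hψ y hyU⟩, ⟨c, hfrontier y (hU.frontier_eq ▸ ⟨hy, hyU⟩)⟩]
  have hext : ∀ y ∈ U, extendFrom U ψ y = ψ y := fun y hy =>
    extendFrom_eq (subset_closure hy) (hψ y hy)
  obtain ⟨y, hy, hymax⟩ := hUc.exists_isMaxOn ⟨x, subset_closure hx⟩
    (continuousOn_extendFrom subset_rfl hlim)
  have hxy : ψ x ≤ extendFrom U ψ y := hext x hx ▸ hymax (subset_closure hx)
  by_cases hyU : y ∈ U
  · rw [hext y hyU] at hxy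
    refine hxy.trans (hmax y hyU ?_)
    filter_upwards [hU.mem_nhds hyU] with w hw
    rw [← hext w hw, ← hext y hyU]
    exact hymax (subset_closure hw)
  · rwa [extendFrom_eq hy (hfrontier y (hU.frontier_eq ▸ ⟨hy, hyU⟩))] at hxy

/-- The pull-back under `f` of the hyperbolic density `1 / (1 - ‖w‖ ^ 2)` of the unit disc. -/
noncomputable def pullbackDensity (f : ℂ → ℂ) (z : ℂ) : ℝ :=
  ‖deriv f z‖ / (1 - ‖f z‖ ^ 2)

section GlobalTheory

variable {U : Set ℂ} {f g h : ℂ → ℂ}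

theorem densityRatio_eq_div {z : ℂ} (hderiv : deriv f z = h z * deriv g z) (hg' : deriv g z ≠ 0) :
    densityRatio h f g z = pullbackDensity f z / pullbackDensity g z := by
  have hnorm : ‖deriv g z‖ ≠ 0 := norm_ne_zero_iff.2 hg'
  rw [densityRatio, pullbackDensity, pullbackDensity, hderiv, norm_mul, div_div_div_eq,
    mul_comm (1 - ‖f z‖ ^ 2), mul_right_comm, mul_comm _ ‖deriv g z‖, mul_div_mul_left _ _ hnorm]

theorem densityRatio_inv (h f g : ℂ → ℂ) : densityRatio h⁻¹ g f = (densityRatio h f g)⁻¹ := by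
  ext z
  simp only [densityRatio, Pi.inv_apply, norm_inv, inv_div]
  rw [← div_div, inv_mul_eq_div, div_right_comm]

theorem continuousOn_densityRatio (hf : ContinuousOn f U) (hg : ContinuousOn g U)
    (hh : ContinuousOn h U) (hfU : Set.MapsTo f U (ball 0 1)) :
    ContinuousOn (densityRatio h f g) U := by
  refine (hh.norm.mul (continuousOn_const.sub (hg.norm.pow 2))).div
    (continuousOn_const.sub (hf.norm.pow 2)) fun z hz => ?_
  nlinarith [norm_nonneg (f z), mem_ball_zero_iff.1 (hfU hz)]

theorem densityRatio_le_one (hU : IsOpen U) (hUb : Bornology.IsBounded U)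
    (hf : AnalyticOnNhd ℂ f U) (hg : AnalyticOnNhd ℂ g U) (hh : AnalyticOnNhd ℂ h U)
    (hfU : Set.MapsTo f U (ball 0 1)) (hgU : Set.MapsTo g U (ball 0 1))
    (hderiv : ∀ z ∈ U, deriv f =ᶠ[𝓝 z] h * deriv g)
    (hg' : ∀ z ∈ U, analyticOrderAt (deriv g) z ≠ ⊤)
    (hfrontier : ∀ ζ ∈ frontier U, Tendsto (densityRatio h f g) (𝓝[U] ζ) (𝓝 1)) {z : ℂ}
    (hz : z ∈ U) : densityRatio h f g z ≤ 1 :=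
  le_of_isLocalMax_le_of_tendsto_frontier hU hUb.isCompact_closure
    (continuousOn_densityRatio hf.continuousOn hg.continuousOn hh.continuousOn hfU) hfrontier
    (fun w hw => densityRatio_le_one_of_isLocalMax (hf w hw) (hg w hw) (hh w hw)
      (mem_ball_zero_iff.1 (hfU hw)) (mem_ball_zero_iff.1 (hgU hw)) (hderiv w hw) (hg' w hw)) hz

theorem densityRatio_eq_one (hU : IsOpen U) (hUb : Bornology.IsBounded U)
    (hf : AnalyticOnNhd ℂ f U) (hg : AnalyticOnNhd ℂ g U) (hh : AnalyticOnNhd ℂ h U)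
    (hh₀ : ∀ z ∈ U, h z ≠ 0)
    (hfU : Set.MapsTo f U (ball 0 1)) (hgU : Set.MapsTo g U (ball 0 1))
    (hderiv : ∀ z ∈ U, deriv f =ᶠ[𝓝 z] h * deriv g)
    (hg' : ∀ z ∈ U, analyticOrderAt (deriv g) z ≠ ⊤)
    (hfrontier : ∀ ζ ∈ frontier U, Tendsto (densityRatio h f g) (𝓝[U] ζ) (𝓝 1)) {z : ℂ}
    (hz : z ∈ U) : densityRatio h f g z = 1 := by
  have hle := densityRatio_le_one hU hUb hf hg hh hfU hgU hderiv hg' hfrontier hz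
  have hderiv_inv : ∀ w ∈ U, deriv g =ᶠ[𝓝 w] h⁻¹ * deriv f := fun w hw => by
    filter_upwards [hderiv w hw, hU.mem_nhds hw] with u hu huU
    rw [Pi.mul_apply, hu, Pi.mul_apply, Pi.inv_apply, inv_mul_cancel_left₀ (hh₀ u huU)]
  have hf' : ∀ w ∈ U, analyticOrderAt (deriv f) w ≠ ⊤ := fun w hw => by
    rw [analyticOrderAt_congr (hderiv w hw), analyticOrderAt_mul (hh w hw) (hg w hw).deriv,
      (hh w hw).analyticOrderAt_eq_zero.2 (hh₀ w hw), zero_add]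
    exact hg' w hw
  have hfrontier_inv : ∀ ζ ∈ frontier U, Tendsto (densityRatio h⁻¹ g f) (𝓝[U] ζ) (𝓝 1) :=
    fun ζ hζ => by
      rw [densityRatio_inv, ← inv_one]
      exact (hfrontier ζ hζ).inv₀ one_ne_zero
  have hle_inv := densityRatio_le_one hU hUb hg hf (hh.inv hh₀) hgU hfU hderiv_inv hf'
    hfrontier_inv hz
  have hpos : 0 < densityRatio h f g z := by
    have hf1 := mem_ball_zero_iff.1 (hfU hz)
    have hg1 := mem_ball_zero_iff.1 (hgU hz)
    exact div_pos (mul_pos (norm_pos_iff.2 (hh₀ z hz)) (by nlinarith [norm_nonneg (g z)]))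
      (by nlinarith [norm_nonneg (f z)])
  rw [densityRatio_inv, Pi.inv_apply] at hle_inv
  exact hle.antisymm ((inv_le_one₀ hpos).1 hle_inv)

theorem analyticOrderAt_deriv_ne_top_of_tendsto {ζ : ℂ} (hUc : IsPreconnected U)
    (hg : AnalyticOnNhd ℂ g U) (hζ : ζ ∈ frontier U)
    (hlim : Tendsto (pullbackDensity f / pullbackDensity g) (𝓝[U] ζ) (𝓝 1)) {z : ℂ} (hz : z ∈ U) :
    analyticOrderAt (deriv g) z ≠ ⊤ := by
  have := mem_closure_iff_nhdsWithin_neBot.1 (frontier_subset_closure hζ)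
  obtain ⟨w, hw, hwU⟩ := ((hlim.eventually_ne one_ne_zero).and self_mem_nhdsWithin).exists
  have hg' : deriv g w ≠ 0 := fun h0 => hw (by simp [pullbackDensity, h0])
  refine hg.deriv.analyticOrderAt_ne_top_of_isPreconnected hUc hwU hz ?_
  rw [(hg w hwU).deriv.analyticOrderAt_eq_zero.2 hg']
  exact ENat.zero_ne_top

theorem exists_eqOn_mul_blaschkeFactor (hU : IsOpen U) (hUb : Bornology.IsBounded U)
    (hUc : IsConnected U) (hf : AnalyticOnNhd ℂ f U) (hg : AnalyticOnNhd ℂ g U)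
    (hfU : Set.MapsTo f U (ball 0 1)) (hgU : Set.MapsTo g U (ball 0 1))
    (hcrit : ∀ z ∈ U, analyticOrderAt (deriv f) z = analyticOrderAt (deriv g) z)
    (hfrontier : ∀ ζ ∈ frontier U,
      Tendsto (pullbackDensity f / pullbackDensity g) (𝓝[U] ζ) (𝓝 1)) :
    ∃ τ w : ℂ, ‖τ‖ = 1 ∧ ‖w‖ < 1 ∧ ∀ z ∈ U, f z = τ * blaschkeFactor w (g z) := by
  obtain ⟨ζ, hζ⟩ : (frontier U).Nonempty :=
    nonempty_frontier_iff.2 ⟨hUc.nonempty, fun h => NormedSpace.unbounded_univ ℝ ℂ (h ▸ hUb)⟩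
  have hg' : ∀ z ∈ U, analyticOrderAt (deriv g) z ≠ ⊤ := fun z hz =>
    analyticOrderAt_deriv_ne_top_of_tendsto hUc.isPreconnected hg hζ (hfrontier ζ hζ) hz
  obtain ⟨h, hh, hh₀, hderiv⟩ := exists_analyticOnNhd_eventuallyEq_mul hf.deriv hg.deriv hg' hcrit
  have hratio : ∀ z ∈ U, densityRatio h f g z = 1 := fun z hz => by
    refine densityRatio_eq_one hU hUb hf hg hh hh₀ hfU hgU hderiv hg'
      (fun ξ hξ => ?_) hz
    refine (hfrontier ξ hξ).congr' ?_
    filter_upwards [(hfrontier ξ hξ).eventually_ne one_ne_zero, self_mem_nhdsWithin] with w hw hwU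
    exact (densityRatio_eq_div (hderiv w hwU).self_of_nhds
      fun h0 => hw (by simp [pullbackDensity, h0])).symm
  obtain ⟨z₀, hz₀⟩ := hUc.nonempty
  obtain ⟨τ, w, hτ, hw, heq⟩ := exists_eventuallyEq_mul_blaschkeFactor (hf z₀ hz₀) (hg z₀ hz₀)
    (hh z₀ hz₀) (mem_ball_zero_iff.1 (hfU hz₀)) (mem_ball_zero_iff.1 (hgU hz₀)) (hderiv z₀ hz₀)
    (eventually_of_mem (hU.mem_nhds hz₀) hratio)
  have hcomp : AnalyticOnNhd ℂ (fun z => τ * blaschkeFactor w (g z)) U := fun z hz =>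
    analyticAt_const.mul
      (analyticAt_blaschkeFactor_comp hw (hg z hz) (mem_ball_zero_iff.1 (hgU hz)))
  exact ⟨τ, w, hτ, hw, hf.eqOn_of_preconnected_of_eventuallyEq hcomp hUc.isPreconnected hz₀ heq⟩

end GlobalTheory

/-- The finite Blaschke product with zeros `a j`, counted with multiplicity, and leading constant
`η`, which has modulus one in all applications. -/
noncomputable def blaschkeProduct {ι : Type*} [Fintype ι] (η : ℂ) (a : ι → ℂ) (z : ℂ) : ℂ :=
  η * ∏ j, blaschkeFactor (a j) z

section BlaschkeBoundary

theorem norm_blaschkeFactor_eq_one {a ζ : ℂ} (ha : ‖a‖ < 1) (hζ : ‖ζ‖ = 1) :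
    ‖blaschkeFactor a ζ‖ = 1 := by
  have h := one_sub_norm_blaschkeFactor_sq ha hζ.le
  rw [hζ, one_pow, sub_self, mul_zero, sub_eq_zero] at h
  exact (pow_eq_one_iff_of_nonneg (norm_nonneg _) two_ne_zero).1 h.symm

theorem mul_logDeriv_blaschkeFactor {a ζ : ℂ} (ha : ‖a‖ < 1) (hζ : ‖ζ‖ = 1) :
    ζ * logDeriv (blaschkeFactor a) ζ = ‖deriv (blaschkeFactor a) ζ‖ := by
  have hden := one_sub_conj_mul_ne_zero ha hζ.le
  have hconj : a - ζ = -ζ * conj (1 - conj a * ζ) := by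
    have hζζ : ζ * conj ζ = 1 := by rw [Complex.mul_conj', hζ]; norm_num
    simp only [map_sub, map_one, map_mul, Complex.conj_conj]
    linear_combination -a * hζζ
  have hζ₀ : ζ ≠ 0 := norm_ne_zero_iff.1 (by simp [hζ])
  rw [logDeriv_apply, norm_deriv_blaschkeFactor ha hζ.le,
    (hasDerivAt_blaschkeFactor ha hζ.le).deriv, blaschkeFactor, hconj]
  push_cast
  rw [← Complex.mul_conj' (1 - conj a * ζ)]
  field_simp [hden]

variable {ι : Type*} {η ζ : ℂ} {a : ι → ℂ}

theorem tendsto_one_sub_norm_prod_blaschkeFactor_sq_div (s : Finset ι) (ha : ∀ j, ‖a j‖ < 1)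
    (hζ : ‖ζ‖ = 1) :
    Tendsto (fun z => (1 - ‖∏ j ∈ s, blaschkeFactor (a j) z‖ ^ 2) / (1 - ‖z‖ ^ 2))
      (𝓝[ball 0 1] ζ) (𝓝 (∑ j ∈ s, ‖deriv (blaschkeFactor (a j)) ζ‖)) := by
  induction s using Finset.cons_induction with
  | empty => simp [tendsto_const_nhds]
  | cons i s hi ih =>
    have hφ := analyticAt_blaschkeFactor (ha i) hζ.le
    have hφ_norm : Tendsto (fun z => ‖blaschkeFactor (a i) z‖ ^ 2) (𝓝[ball 0 1] ζ) (𝓝 1) := by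
      have hnorm := hφ.continuousAt.norm.tendsto.mono_left (nhdsWithin_le_nhds (s := ball 0 1))
      rw [norm_blaschkeFactor_eq_one (ha i) hζ] at hnorm
      simpa only [one_pow] using hnorm.pow 2
    have hφ' : Tendsto (fun z => ‖deriv (blaschkeFactor (a i)) z‖) (𝓝[ball 0 1] ζ)
        (𝓝 ‖deriv (blaschkeFactor (a i)) ζ‖) :=
      hφ.deriv.continuousAt.norm.tendsto.mono_left nhdsWithin_le_nhds
    rw [Finset.sum_cons, ← one_mul (∑ j ∈ s, _)]
    refine (hφ'.add (hφ_norm.mul ih)).congr' ?_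
    filter_upwards [self_mem_nhdsWithin] with z hz
    rw [mem_ball_zero_iff] at hz
    have hz' : 1 - ‖z‖ ^ 2 ≠ 0 := by nlinarith [norm_nonneg z]
    rw [Finset.prod_cons, norm_mul, mul_pow, ← mul_div_assoc,
      ← mul_div_cancel_right₀ ‖deriv _ z‖ hz',
      ← one_sub_norm_blaschkeFactor_sq_eq_norm_deriv_mul (ha i) hz.le]
    ring

variable [Fintype ι]

theorem analyticAt_blaschkeProduct (ha : ∀ j, ‖a j‖ < 1) (hζ : ‖ζ‖ ≤ 1) :
    AnalyticAt ℂ (blaschkeProduct η a) ζ :=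
  analyticAt_const.mul
    (Finset.analyticAt_fun_prod _ fun j _ => analyticAt_blaschkeFactor (ha j) hζ)

theorem norm_blaschkeProduct_lt_one [Nonempty ι] (hη : ‖η‖ = 1) (ha : ∀ j, ‖a j‖ < 1)
    (hζ : ‖ζ‖ < 1) : ‖blaschkeProduct η a ζ‖ < 1 := by
  classical
  obtain ⟨i⟩ := ‹Nonempty ι›
  have hlt : ∀ j, ‖blaschkeFactor (a j) ζ‖ < 1 := fun j => norm_blaschkeFactor_lt_one (ha j) hζ
  rw [blaschkeProduct, norm_mul, hη, one_mul, norm_prod,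
    ← Finset.mul_prod_erase _ _ (Finset.mem_univ i)]
  exact mul_lt_one_of_nonneg_of_lt_one_left (norm_nonneg _) (hlt i)
    (Finset.prod_le_one (fun j _ => norm_nonneg _) fun j _ => (hlt j).le)

theorem norm_blaschkeProduct_eq_one (hη : ‖η‖ = 1) (ha : ∀ j, ‖a j‖ < 1) (hζ : ‖ζ‖ = 1) :
    ‖blaschkeProduct η a ζ‖ = 1 := by
  simp [blaschkeProduct, hη, norm_blaschkeFactor_eq_one (ha _) hζ]

theorem norm_deriv_blaschkeProduct (hη : ‖η‖ = 1) (ha : ∀ j, ‖a j‖ < 1) (hζ : ‖ζ‖ = 1) :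
    ‖deriv (blaschkeProduct η a) ζ‖ = ∑ j, ‖deriv (blaschkeFactor (a j)) ζ‖ := by
  have hη₀ : η ≠ 0 := norm_ne_zero_iff.1 (by simp [hη])
  have hlog : ζ * logDeriv (blaschkeProduct η a) ζ =
      ((∑ j, ‖deriv (blaschkeFactor (a j)) ζ‖ : ℝ) : ℂ) := by
    unfold blaschkeProduct
    rw [logDeriv_const_mul _ _ hη₀, logDeriv_prod, Finset.mul_sum, Complex.ofReal_sum]
    · exact Finset.sum_congr rfl fun j _ => mul_logDeriv_blaschkeFactor (ha j) hζ
    · exact fun j _ => norm_ne_zero_iff.1 (by simp [norm_blaschkeFactor_eq_one (ha j) hζ])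
    · exact fun j _ => (analyticAt_blaschkeFactor (ha j) hζ.le).differentiableAt
  have hnorm := congrArg norm hlog
  rwa [logDeriv_apply, norm_mul, norm_div, hζ, norm_blaschkeProduct_eq_one hη ha hζ, one_mul,
    div_one, Complex.norm_of_nonneg (Finset.sum_nonneg fun j _ => norm_nonneg _)] at hnorm

theorem tendsto_pullbackDensity_blaschkeProduct [Nonempty ι] (hη : ‖η‖ = 1) (ha : ∀ j, ‖a j‖ < 1)
    (hζ : ‖ζ‖ = 1) :
    Tendsto (fun z => pullbackDensity (blaschkeProduct η a) z * (1 - ‖z‖ ^ 2)) (𝓝[ball 0 1] ζ)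
      (𝓝 1) := by
  have hsum : ∑ j, ‖deriv (blaschkeFactor (a j)) ζ‖ ≠ 0 :=
    (Finset.sum_pos (fun j _ => norm_deriv_blaschkeFactor_pos (ha j) hζ.le)
      Finset.univ_nonempty).ne'
  have hderiv : Tendsto (fun z => ‖deriv (blaschkeProduct η a) z‖) (𝓝[ball 0 1] ζ)
      (𝓝 (∑ j, ‖deriv (blaschkeFactor (a j)) ζ‖)) := by
    rw [← norm_deriv_blaschkeProduct hη ha hζ]
    exact (analyticAt_blaschkeProduct ha hζ.le).deriv.continuousAt.norm.tendsto.mono_left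
      nhdsWithin_le_nhds
  have hquot := hderiv.div (tendsto_one_sub_norm_prod_blaschkeFactor_sq_div _ ha hζ) hsum
  rw [div_self hsum] at hquot
  refine hquot.congr fun z => ?_
  rw [pullbackDensity, Pi.div_apply, div_div_eq_mul_div, div_mul_eq_mul_div]
  simp only [blaschkeProduct, norm_mul, hη, one_mul]

theorem tendsto_pullbackDensity_div_pullbackDensity_blaschkeProduct {κ : Type*} [Fintype κ]
    [Nonempty ι] [Nonempty κ] {η' : ℂ} {b : κ → ℂ} (hη : ‖η‖ = 1) (hη' : ‖η'‖ = 1)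
    (ha : ∀ j, ‖a j‖ < 1) (hb : ∀ j, ‖b j‖ < 1) (hζ : ‖ζ‖ = 1) :
    Tendsto (pullbackDensity (blaschkeProduct η a) / pullbackDensity (blaschkeProduct η' b))
      (𝓝[ball 0 1] ζ) (𝓝 1) := by
  have hquot := (tendsto_pullbackDensity_blaschkeProduct hη ha hζ).div
    (tendsto_pullbackDensity_blaschkeProduct hη' hb hζ) one_ne_zero
  rw [div_one] at hquot
  refine hquot.congr' ?_
  filter_upwards [self_mem_nhdsWithin] with z hz
  exact mul_div_mul_right _ _ (by nlinarith [norm_nonneg z, mem_ball_zero_iff.1 hz])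

end BlaschkeBoundary

theorem exists_blaschkeProduct_eq_mul_blaschkeFactor {ι κ : Type*} [Fintype ι] [Fintype κ]
    [Nonempty ι] [Nonempty κ] {η η' : ℂ} {a : ι → ℂ} {b : κ → ℂ} (hη : ‖η‖ = 1) (hη' : ‖η'‖ = 1)
    (ha : ∀ j, ‖a j‖ < 1) (hb : ∀ j, ‖b j‖ < 1)
    (hcrit : ∀ z ∈ ball (0 : ℂ) 1,
      vOrder (deriv (blaschkeProduct η a)) z = vOrder (deriv (blaschkeProduct η' b)) z) :
    ∃ τ w : ℂ, ‖τ‖ = 1 ∧ ‖w‖ < 1 ∧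
      ∀ z ∈ ball (0 : ℂ) 1,
        blaschkeProduct η a z = τ * blaschkeFactor w (blaschkeProduct η' b z) := by
  have hf : AnalyticOnNhd ℂ (blaschkeProduct η a) (ball 0 1) := fun z hz =>
    analyticAt_blaschkeProduct ha (mem_ball_zero_iff.1 hz).le
  have hg : AnalyticOnNhd ℂ (blaschkeProduct η' b) (ball 0 1) := fun z hz =>
    analyticAt_blaschkeProduct hb (mem_ball_zero_iff.1 hz).le
  refine exists_eqOn_mul_blaschkeFactor isOpen_ball isBounded_ball
    ⟨nonempty_ball.2 one_pos, (convex_ball _ _).isPreconnected⟩ hf hg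
    (fun z hz => mem_ball_zero_iff.2 (norm_blaschkeProduct_lt_one hη ha (mem_ball_zero_iff.1 hz)))
    (fun z hz => mem_ball_zero_iff.2 (norm_blaschkeProduct_lt_one hη' hb (mem_ball_zero_iff.1 hz)))
    (fun z hz => ?_) fun ζ hζ => ?_
  · rw [← vOrder_eq_analyticOrderAt (hf z hz).deriv, ← vOrder_eq_analyticOrderAt (hg z hz).deriv,
      hcrit z hz]
  · rw [frontier_ball _ one_ne_zero] at hζ
    exact tendsto_pullbackDensity_div_pullbackDensity_blaschkeProduct hη hη' ha hb
      (mem_sphere_zero_iff_norm.1 hζ)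

/-- **Heins' theorem (uniqueness).** If two finite Blaschke products `B₁`, `B₂` of the
same degree `n` have derivatives with exactly the same zeros in the open unit disk,
with the same multiplicities, then `B₂ = T ∘ B₁` on the disk for some conformal
automorphism `T` of the disk. -/
theorem heins_uniqueness (n : ℕ) (η₁ η₂ : ℂ) (a₁ a₂ : Fin n → ℂ)
    (hη₁ : ‖η₁‖ = 1) (hη₂ : ‖η₂‖ = 1)
    (ha₁ : ∀ j, ‖a₁ j‖ < 1) (ha₂ : ∀ j, ‖a₂ j‖ < 1)
    (B₁ B₂ : ℂ → ℂ)
    (hB₁ : ∀ z, B₁ z = η₁ * ∏ j, (a₁ j - z) / (1 - (starRingEnd ℂ) (a₁ j) * z))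
    (hB₂ : ∀ z, B₂ z = η₂ * ∏ j, (a₂ j - z) / (1 - (starRingEnd ℂ) (a₂ j) * z))
    (hcrit : ∀ w ∈ Metric.ball (0 : ℂ) 1, vOrder (deriv B₁) w = vOrder (deriv B₂) w) :
    ∃ (τ : ℂ) (z₀ : ℂ), ‖τ‖ = 1 ∧ ‖z₀‖ < 1 ∧
      ∀ z ∈ Metric.ball (0 : ℂ) 1,
        B₂ z = τ * (z₀ - B₁ z) / (1 - (starRingEnd ℂ) z₀ * B₁ z) := by
  rcases isEmpty_or_nonempty (Fin n) with hn | hn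
  · have hη₁_ne : η₁ ≠ 0 := norm_ne_zero_iff.1 (by simp [hη₁])
    refine ⟨-η₂ / η₁, 0, by simp [hη₁, hη₂], by simp, fun z _ => ?_⟩
    simp [hB₁, hB₂, hη₁_ne]
  · obtain rfl : B₁ = blaschkeProduct η₁ a₁ := funext hB₁
    obtain rfl : B₂ = blaschkeProduct η₂ a₂ := funext hB₂
    obtain ⟨τ, z₀, hτ, hz₀, heq⟩ := exists_blaschkeProduct_eq_mul_blaschkeFactor hη₂ hη₁ ha₂ ha₁
      fun z hz => (hcrit z hz).symm
    refine ⟨τ, z₀, hτ, hz₀, fun z hz => ?_⟩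
    rw [heq z hz, blaschkeFactor, mul_div_assoc]
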